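/- Let n ≥ 1, let P ⊆ [0,1]^n be a convex set, and let k ≥ 0. Then L^k(P) ⊆ T^k(P); equivalently, L^k(P) ⊆ Q for every Q ∈ R_k(P). -/

import Mathlib

open Set

def cube (n : ℕ) : Set (Fin n → ℝ) := {x | ∀ i, 0 ≤ x i ∧ x i ≤ 1}

def Lop (n : ℕ) (P : Set (Fin n → ℝ)) : Set (Fin n → ℝ) :=
  ⋂ i : Fin n, convexHull ℝ ((P ∩ {x | x i = 0}) ∪ (P ∩ {x | x i = 1}))

def Lk (n : ℕ) : ℕ → Set (Fin n → ℝ) → Set (Fin n → ℝ)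
  | 0, P => P
  | k + 1, P => Lop n (Lk n k P)

/-- `R_k(P)`: the family of branch-and-bound relaxations of `P` of height at most `k`. -/
def Rk (n : ℕ) : ℕ → Set (Fin n → ℝ) → Set (Set (Fin n → ℝ))
  | 0, P => {P}
  | k + 1, P => {P} ∪ {Q | ∃ j : Fin n, ∃ A ∈ Rk n k (P ∩ {x | x j = 0}),
      ∃ B ∈ Rk n k (P ∩ {x | x j = 1}), Q = convexHull ℝ (A ∪ B)}

/-- The height-`k` branch-and-bound operator `T^k`. -/
def Tk (n k : ℕ) (P : Set (Fin n → ℝ)) : Set (Fin n → ℝ) :=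
  ⋂ Q ∈ Rk n k P, Q

lemma cube_convex (n : ℕ) : Convex ℝ (cube n) := by
  intro x hx y hy a b ha hb hab i
  have h1 := hx i
  have h2 := hy i
  simp only [Pi.add_apply, Pi.smul_apply, smul_eq_mul]
  constructor
  · nlinarith [mul_nonneg ha h1.1, mul_nonneg hb h2.1]
  · nlinarith [mul_nonneg ha (sub_nonneg.2 h1.2), mul_nonneg hb (sub_nonneg.2 h2.2)]

lemma face_hull (n : ℕ) (S : Set (Fin n → ℝ)) (hS : S ⊆ cube n) (j : Fin n) (c : ℝ)
    (hc : c = 0 ∨ c = 1) :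
    convexHull ℝ S ∩ {x | x j = c} ⊆ convexHull ℝ (S ∩ {x | x j = c}) := by
  have key : convexHull ℝ S ⊆
      {x | x ∈ cube n ∧ (x j = c → x ∈ convexHull ℝ (S ∩ {x | x j = c}))} := by
    apply convexHull_min
    · intro x hx
      exact ⟨hS hx, fun h => subset_convexHull ℝ _ ⟨hx, h⟩⟩
    · rw [convex_iff_forall_pos]
      intro x hx y hy a b ha hb hab
      refine ⟨cube_convex n hx.1 hy.1 ha.le hb.le hab, fun h => ?_⟩
      have h1 := hx.1 j
      have h2 := hy.1 j
      simp only [Pi.add_apply, Pi.smul_apply, smul_eq_mul] at h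
      have hxy : x j = c ∧ y j = c := by
        rcases hc with rfl | rfl
        · have p1 := mul_nonneg ha.le h1.1
          have p2 := mul_nonneg hb.le h2.1
          have q1 : a * x j = 0 := by linarith
          have q2 : b * y j = 0 := by linarith
          exact ⟨(mul_eq_zero.1 q1).resolve_left (ne_of_gt ha), (mul_eq_zero.1 q2).resolve_left (ne_of_gt hb)⟩
        · have p1 := mul_nonneg ha.le (sub_nonneg.2 h1.2)
          have p2 := mul_nonneg hb.le (sub_nonneg.2 h2.2)
          have q1 : a * (1 - x j) = 0 := by linarith
          have q2 : b * (1 - y j) = 0 := by linarith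
          have r1 := (mul_eq_zero.1 q1).resolve_left (ne_of_gt ha)
          have r2 := (mul_eq_zero.1 q2).resolve_left (ne_of_gt hb)
          constructor <;> linarith
      exact convex_convexHull ℝ _ (hx.2 hxy.1) (hy.2 hxy.2) ha.le hb.le hab
  intro x hx
  exact (key hx.1).2 hx.2

lemma Lop_mono (n : ℕ) {P Q : Set (Fin n → ℝ)} (h : P ⊆ Q) : Lop n P ⊆ Lop n Q :=
  iInter_mono fun _ => convexHull_mono
    (union_subset_union (inter_subset_inter_left _ h) (inter_subset_inter_left _ h))

lemma Lop_subset (n : ℕ) (hn : 1 ≤ n) {P : Set (Fin n → ℝ)} (h : Convex ℝ P) : Lop n P ⊆ P :=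
  (iInter_subset _ (⟨0, hn⟩ : Fin n)).trans
    (convexHull_min (union_subset inter_subset_left inter_subset_left) h)

lemma Lop_convex (n : ℕ) (P : Set (Fin n → ℝ)) : Convex ℝ (Lop n P) :=
  convex_iInter fun _ => convex_convexHull ℝ _

lemma Lk_convex (n : ℕ) {P : Set (Fin n → ℝ)} (h : Convex ℝ P) (k : ℕ) : Convex ℝ (Lk n k P) := by
  cases k with
  | zero => exact h
  | succ k => exact Lop_convex n _

lemma Lk_subset (n : ℕ) (hn : 1 ≤ n) {P : Set (Fin n → ℝ)} (h : Convex ℝ P) (k : ℕ) :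
    Lk n k P ⊆ P := by
  induction k with
  | zero => exact subset_rfl
  | succ k ih => exact (Lop_subset n hn (Lk_convex n h k)).trans ih

lemma Lop_face (n : ℕ) {P : Set (Fin n → ℝ)} (hP : P ⊆ cube n) (j : Fin n) (c : ℝ)
    (hc : c = 0 ∨ c = 1) : Lop n P ∩ {x | x j = c} ⊆ Lop n (P ∩ {x | x j = c}) := by
  intro x hx
  refine mem_iInter.2 fun i => ?_
  have h1 := mem_iInter.1 hx.1 i
  have h2 := face_hull n _ (union_subset (inter_subset_left.trans hP)
    (inter_subset_left.trans hP)) j c hc ⟨h1, hx.2⟩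
  refine convexHull_mono ?_ h2
  rintro y ⟨hy | hy, hyj⟩
  · exact Or.inl ⟨⟨hy.1, hyj⟩, hy.2⟩
  · exact Or.inr ⟨⟨hy.1, hyj⟩, hy.2⟩

lemma Lk_face (n : ℕ) (hn : 1 ≤ n) {P : Set (Fin n → ℝ)} (hP : P ⊆ cube n) (h : Convex ℝ P)
    (j : Fin n) (c : ℝ) (hc : c = 0 ∨ c = 1) (k : ℕ) :
    Lk n k P ∩ {x | x j = c} ⊆ Lk n k (P ∩ {x | x j = c}) := by
  induction k with
  | zero => exact subset_rfl
  | succ k ih => exact (Lop_face n ((Lk_subset n hn h k).trans hP) j c hc).trans (Lop_mono n ih)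

lemma face_convex (n : ℕ) (j : Fin n) (c : ℝ) : Convex ℝ {x : Fin n → ℝ | x j = c} := by
  intro x hx y hy a b ha hb hab
  simp only [mem_ofPred_eq] at hx hy
  simp only [mem_ofPred_eq, Pi.add_apply, Pi.smul_apply, smul_eq_mul, hx, hy]
  rw [← add_mul, hab, one_mul]

lemma Lk_subset_Rk (n : ℕ) (hn : 1 ≤ n) (k : ℕ) : ∀ P : Set (Fin n → ℝ), P ⊆ cube n →
    Convex ℝ P → ∀ Q ∈ Rk n k P, Lk n k P ⊆ Q := by
  induction k with
  | zero =>
    intro P _ _ Q hQ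
    have hQP : Q = P := hQ
    rw [hQP]
    exact subset_rfl
  | succ k ih =>
    intro P hP hc Q hQ
    rcases hQ with hQ | ⟨j, A, hA, B, hB, rfl⟩
    · have hQP : Q = P := hQ
      rw [hQP]
      exact Lk_subset n hn hc _
    · refine (iInter_subset _ j).trans (convexHull_mono (union_subset_union ?_ ?_))
      · exact (Lk_face n hn hP hc j 0 (Or.inl rfl) k).trans
          (ih _ (inter_subset_left.trans hP) (hc.inter (face_convex n j 0)) A hA)
      · exact (Lk_face n hn hP hc j 1 (Or.inr rfl) k).trans
          (ih _ (inter_subset_left.trans hP) (hc.inter (face_convex n j 1)) B hB)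

theorem stmt17 (n : ℕ) (hn : 1 ≤ n) (P : Set (Fin n → ℝ)) (hPcube : P ⊆ cube n)
    (hPconv : Convex ℝ P) (k : ℕ) :
    Lk n k P ⊆ Tk n k P ∧ ∀ Q ∈ Rk n k P, Lk n k P ⊆ Q :=
  ⟨subset_iInter₂ (Lk_subset_Rk n hn k P hPcube hPconv), Lk_subset_Rk n hn k P hPcube hPconv⟩
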